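/- Let G be a finitely generated abelian group, X = (x_1,…,x_N) a finite list of elements of G, and q ∈ ℤ_M(X). Then χ_X(q) = (−1)^{rk(X)}·q^{rk(G)−rk(X)}·T_X(1−q, 0) and χ*_X(q) = (−1)^{N−rk(X)}·T_X(0, 1−q). -/

import Mathlib

open Finset

noncomputable section

variable {G : Type*} [AddCommGroup G] {N : ℕ}

/-- The subgroup `⟨x_i : i ∈ A⟩` of `G`. -/
def genSub (X : Fin N → G) (A : Finset (Fin N)) : AddSubgroup G :=
  AddSubgroup.closure (X '' (A : Set (Fin N)))

/-- The torsion-free rank of a finitely generated abelian group. -/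
def tfRank (H : Type*) [AddCommGroup H] : ℕ := Module.finrank ℤ H

/-- `rk(A)` = torsion-free rank of the subgroup `⟨x_i : i ∈ A⟩`. -/
def rkA (X : Fin N → G) (A : Finset (Fin N)) : ℕ := tfRank (genSub X A)

/-- `m(A)` = order of the torsion subgroup `G_A` of `G/⟨x_i : i ∈ A⟩`. -/
def mA (X : Fin N → G) (A : Finset (Fin N)) : ℕ :=
  Nat.card (AddCommGroup.torsion (G ⧸ genSub X A))

/-- The subgroup `qG = {q•g : g ∈ G}` of `G`. -/
def qMul (q : ℕ) (G : Type*) [AddCommGroup G] : AddSubgroup G :=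
  AddSubgroup.map (AddMonoidHom.mk' (fun g : G => q • g) (fun a b => smul_add q a b)) ⊤

/-- `χ*_{X|_A}(q)`: the number of nowhere-zero `q`-flows on the sublist `X|_A`, i.e. of
`ψ : A → (ℤ/qℤ)∖{0}` with `Σ_{i ∈ A} ψ(i)·x̄_i = 0` in `G/qG`. -/
def flowCount (q : ℕ) (X : Fin N → G) (A : Finset (Fin N)) : ℕ :=
  Nat.card {ψ : A → ZMod q //
    (∀ i, ψ i ≠ 0) ∧
    ∑ i : A, (ψ i).val • (QuotientAddGroup.mk (X i.1) : G ⧸ qMul q G) = 0}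

/-- `χ_{X/A}(p)`: the number of proper arithmetic `p`-colorings of the contracted list
`X/A`, i.e. of homomorphisms `φ : G/⟨x_i : i ∈ A⟩ →+ ℤ/pℤ` with `φ(x̄_i) ≠ 0` for `i ∉ A`. -/
def colorCount (p : ℕ) (X : Fin N → G) (A : Finset (Fin N)) : ℕ :=
  Nat.card {φ : (G ⧸ genSub X A) →+ ZMod p //
    ∀ i ∉ A, φ (QuotientAddGroup.mk (X i)) ≠ 0}

/-- `B` is a basis: `rk(B) = |B| = rk(X)`. -/
def IsBasis (X : Fin N → G) (B : Finset (Fin N)) : Prop :=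
  rkA X B = B.card ∧ rkA X B = rkA X univ

/-- `q ∈ ℤ_A(X)`: `q > 0` and `q·G_B = 0` for every basis `B`. -/
def memZA (X : Fin N → G) (q : ℕ) : Prop :=
  0 < q ∧ ∀ B : Finset (Fin N), IsBasis X B →
    ∀ g ∈ AddCommGroup.torsion (G ⧸ genSub X B), q • g = 0

open scoped Classical in
/-- `q ∈ ℤ_M(X)`: `q > 0` and `gcd(q, lcm{m(B) : B basis}) = 1`. -/
def memZM (X : Fin N → G) (q : ℕ) : Prop :=
  0 < q ∧
    Nat.gcd q (((univ : Finset (Fin N)).powerset.filter (fun B => IsBasis X B)).lcm (mA X)) = 1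

/-! Inclusion–exclusion over the set `A` of indices at which a coloring, or a flow, vanishes
reduces both counts to the sublists of `X`. Colorings vanishing on `A` are the homomorphisms
`G/⟨A⟩ → ℤ/qℤ`. Flows vanishing on `A` form the kernel of a map from `(ℤ/qℤ)^Aᶜ` onto the image of
`⟨Aᶜ⟩` in `G/qG`. If multiplication by `q` is injective on `G`, on `G/⟨A⟩` and on `G/⟨Aᶜ⟩`, these
sets have `q^(rk G - rk A)` and `q^(|Aᶜ| - rk Aᶜ)` elements, as for free groups.

Coprimality to `m(B)` for all bases `B` gives this injectivity for every `A`: there is a basis `B`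
such that `⟨B⟩` has torsion-free image in `G/⟨A⟩`. If `g` is torsion modulo `⟨A⟩`, then `m(B) g`
lies in `⟨B⟩` and is torsion modulo `⟨A⟩`, hence lies in `⟨A⟩`. So `m(B)` kills the torsion of
`G/⟨A⟩`. -/

theorem tfRank_quotient_add_tfRank [AddGroup.FG G] (S : AddSubgroup G) :
    tfRank (G ⧸ S) + tfRank S = tfRank G :=
  have : Module.Finite ℤ G := Module.Finite.iff_addGroup_fg.2 inferInstance
  S.toIntSubmodule.finrank_quotient_add_finrank

theorem tfRank_quotient [AddGroup.FG G] (S : AddSubgroup G) :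
    tfRank (G ⧸ S) = tfRank G - tfRank S :=
  Nat.eq_sub_of_add_eq (tfRank_quotient_add_tfRank S)

theorem qMul_eq_range (q : ℕ) : qMul q G = (nsmulAddMonoidHom (α := G) q).range :=
  (AddMonoidHom.range_eq_map _).symm

theorem map_qMul {H : Type*} [AddCommGroup H] (q : ℕ) {f : G →+ H} (hf : Function.Surjective f) :
    (qMul q G).map f = qMul q H := by
  ext h
  simp [qMul_eq_range, hf.exists, ← map_nsmul]

theorem comap_mk'_qMul (q : ℕ) (S : AddSubgroup G) :
    (qMul q (G ⧸ S)).comap (QuotientAddGroup.mk' S) = qMul q G ⊔ S := by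
  rw [← map_qMul q (QuotientAddGroup.mk'_surjective S), AddSubgroup.comap_map_eq,
    QuotientAddGroup.ker_mk']

theorem qMul_le_ker (q : ℕ) (φ : G →+ ZMod q) : qMul q G ≤ φ.ker := by
  rintro _ ⟨g, -, rfl⟩
  simp

theorem finite_torsion [AddGroup.FG G] : Finite (AddCommGroup.torsion G) := by
  have : Module.Finite ℤ G := Module.Finite.iff_addGroup_fg.2 inferInstance
  rw [← Submodule.torsion_int]
  exact Module.finite_of_fg_torsion (Submodule.torsion ℤ G) Submodule.torsion_isTorsion

theorem torsion_le_qMul [AddGroup.FG G] {q : ℕ} (hq : IsSMulRegular G q) :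
    AddCommGroup.torsion G ≤ qMul q G := by
  have := finite_torsion (G := G)
  have hinj : Function.Injective fun t : AddCommGroup.torsion G ↦ q • t := fun s t hst ↦
    Subtype.ext (hq (congrArg Subtype.val hst))
  intro t ht
  obtain ⟨s, hs⟩ := Finite.surjective_of_injective hinj ⟨t, ht⟩
  exact ⟨s, trivial, congrArg Subtype.val hs⟩

theorem index_qMul [AddGroup.FG G] {q : ℕ} (hq : IsSMulRegular G q) :
    (qMul q G).index = q ^ tfRank G := by
  let T := AddCommGroup.torsion G
  have : Module.Finite ℤ (G ⧸ T) := Module.Finite.iff_addGroup_fg.2 inferInstance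
  have : Module.Free ℤ (G ⧸ T) := inferInstance
  calc (qMul q G).index
      = (qMul q (G ⧸ T)).index := by
        rw [← AddSubgroup.index_comap_of_surjective _ (QuotientAddGroup.mk'_surjective T),
          comap_mk'_qMul, sup_eq_left.2 (torsion_le_qMul hq)]
    _ = q ^ tfRank (G ⧸ T) := by rw [qMul_eq_range, AddSubgroup.index_range_nsmul, tfRank]
    _ = q ^ tfRank G := congrArg (q ^ ·) finrank_quotient_torsion_eq

/-- The universal property of `G ⧸ S`, as an equivalence between the homomorphisms from `G` that
vanish on `S` and those from `G ⧸ S`. -/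
def homQuotientEquiv {A : Type*} [AddCommGroup A] (S : AddSubgroup G) :
    {φ : G →+ A // S ≤ φ.ker} ≃ (G ⧸ S →+ A) :=
  (Equiv.subtypeEquivRight fun φ ↦ by rw [QuotientAddGroup.ker_mk']).trans
    ((QuotientAddGroup.mk' S).liftOfSurjective (QuotientAddGroup.mk'_surjective S))

theorem natCard_addMonoidHom_of_free {F A : Type*} [AddCommGroup F] [AddCommGroup A]
    [Module.Free ℤ F] [Module.Finite ℤ F] :
    Nat.card (F →+ A) = Nat.card A ^ tfRank F := by
  let b := Module.finBasis ℤ F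
  rw [Nat.card_congr ((addMonoidHomLequivInt ℤ).toEquiv.trans (b.constr ℤ).symm.toEquiv),
    Nat.card_fun, Nat.card_fin, tfRank]

theorem natCard_addMonoidHom_zmod [AddGroup.FG G] {q : ℕ} (hq : IsSMulRegular G q) :
    Nat.card (G →+ ZMod q) = q ^ tfRank G := by
  let T := AddCommGroup.torsion G
  have : Module.Finite ℤ (G ⧸ T) := Module.Finite.iff_addGroup_fg.2 inferInstance
  have hT (φ : G →+ ZMod q) : T ≤ φ.ker := (torsion_le_qMul hq).trans (qMul_le_ker q φ)
  calc Nat.card (G →+ ZMod q)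
      = Nat.card (G ⧸ T →+ ZMod q) :=
        Nat.card_congr ((Equiv.subtypeUnivEquiv hT).symm.trans (homQuotientEquiv T))
    _ = q ^ tfRank (G ⧸ T) := by rw [natCard_addMonoidHom_of_free, Nat.card_zmod]
    _ = q ^ tfRank G := congrArg (q ^ ·) finrank_quotient_torsion_eq

theorem natCard_addMonoidHom_zmod_le_ker [AddGroup.FG G] {q : ℕ} {S : AddSubgroup G}
    (hq : IsSMulRegular (G ⧸ S) q) :
    Nat.card {φ : G →+ ZMod q // S ≤ φ.ker} = q ^ (tfRank G - tfRank S) := by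
  rw [Nat.card_congr (homQuotientEquiv S), natCard_addMonoidHom_zmod hq, tfRank_quotient]

theorem index_qMul_sup [AddGroup.FG G] {q : ℕ} {S : AddSubgroup G}
    (hq : IsSMulRegular (G ⧸ S) q) :
    (qMul q G ⊔ S).index = q ^ (tfRank G - tfRank S) := by
  rw [← comap_mk'_qMul, AddSubgroup.index_comap_of_surjective _ (QuotientAddGroup.mk'_surjective S),
    index_qMul hq, tfRank_quotient]

theorem natCard_map_mk'_qMul [AddGroup.FG G] {q : ℕ} (hq₀ : 0 < q) {S : AddSubgroup G}
    (hG : IsSMulRegular G q) (hS : IsSMulRegular (G ⧸ S) q) :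
    Nat.card (S.map (QuotientAddGroup.mk' (qMul q G))) = q ^ tfRank S := by
  have hindex : (S.map (QuotientAddGroup.mk' (qMul q G))).index = q ^ (tfRank G - tfRank S) := by
    rw [AddSubgroup.index_map, QuotientAddGroup.ker_mk', QuotientAddGroup.range_mk',
      AddSubgroup.index_top, mul_one, sup_comm, index_qMul_sup hS]
  have hle : tfRank S ≤ tfRank G := (tfRank_quotient_add_tfRank S).le.trans' le_add_self
  refine Nat.eq_of_mul_eq_mul_right (pow_pos hq₀ (tfRank G - tfRank S)) ?_
  rw [← hindex, AddSubgroup.card_mul_index, ← AddSubgroup.index_eq_card, index_qMul hG, hindex,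
    ← pow_add, Nat.add_sub_cancel' hle]

section LinearIndepOn

variable {R M ι : Type*} [CommRing R] [IsDomain R] [AddCommGroup M] [Module R M]

theorem exists_smul_mem_of_mem_span {v : ι → M} {I : Set ι} {S : Submodule R M}
    (h : ∀ i ∈ I, ∃ a : R, a ≠ 0 ∧ a • v i ∈ S) {m : M} (hm : m ∈ Submodule.span R (v '' I)) :
    ∃ a : R, a ≠ 0 ∧ a • m ∈ S := by
  induction hm using Submodule.span_induction with
  | mem _ hx => obtain ⟨i, hi, rfl⟩ := hx; exact h i hi
  | zero => exact ⟨1, one_ne_zero, by simp⟩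
  | add x y _ _ hx hy =>
    obtain ⟨⟨a, ha, hax⟩, b, hb, hby⟩ := hx, hy
    refine ⟨a * b, mul_ne_zero ha hb, ?_⟩
    rw [smul_add, mul_smul a b y, mul_comm, mul_smul]
    exact S.add_mem (S.smul_mem b hax) (S.smul_mem a hby)
  | smul c x _ hx =>
    obtain ⟨a, ha, hax⟩ := hx
    exact ⟨a, ha, smul_comm c a x ▸ S.smul_mem c hax⟩

theorem finrank_eq_of_forall_exists_smul_mem {S T : Submodule R M} (hST : S ≤ T)
    (h : ∀ t ∈ T, ∃ a : R, a ≠ 0 ∧ a • t ∈ S) : Module.finrank R S = Module.finrank R T := by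
  have htors : Module.IsTorsion R (T ⧸ S.submoduleOf T) := by
    rintro ⟨⟨t, ht⟩⟩
    obtain ⟨a, ha, hat⟩ := h t ht
    exact ⟨⟨a, mem_nonZeroDivisors_of_ne_zero ha⟩, (Submodule.Quotient.mk_eq_zero _).2 hat⟩
  have hrank := rank_quotient_add_rank_of_isDomain (S.submoduleOf T)
  rw [htors.rank_eq_zero, zero_add, (Submodule.submoduleOfEquivOfLe hST).rank_eq] at hrank
  exact congrArg Cardinal.toNat hrank

theorem exists_maximal_linearIndepOn_subset (v : ι → M) (I : Set ι) :
    ∃ J ⊆ I, LinearIndepOn R v J ∧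
      ∀ i ∈ I, ∃ a : R, a ≠ 0 ∧ a • v i ∈ Submodule.span R (v '' J) := by
  obtain ⟨J, hJ, hmax⟩ := exists_maximal_linearIndepOn R (v ∘ ((↑) : I → ι))
  refine ⟨(↑) '' J, Subtype.coe_image_subset I J, hJ.image_of_comp, fun i hi ↦ ?_⟩
  by_cases hiJ : (⟨i, hi⟩ : I) ∈ J
  · exact ⟨1, one_ne_zero, by
      rw [one_smul]; exact Submodule.subset_span ⟨i, ⟨_, hiJ, rfl⟩, rfl⟩⟩
  · rw [← Set.image_comp]; exact hmax ⟨i, hi⟩ hiJ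

theorem eq_zero_of_smul_eq_zero_of_mem_span {v : ι → M} {I : Set ι} (hv : LinearIndepOn R v I)
    {m : M} (hm : m ∈ Submodule.span R (v '' I)) {a : R} (ha : a ≠ 0) (ham : a • m = 0) :
    m = 0 := by
  rw [Set.image_eq_range] at hm
  have := (Module.Basis.span hv).isTorsionFree
  have hzero : a • (⟨m, hm⟩ : Submodule.span R (Set.range fun i : I ↦ v i)) = 0 :=
    Subtype.ext ham
  exact congrArg Subtype.val ((smul_eq_zero_iff_right ha).1 hzero)

-- `B` is obtained by extending a maximal independent subfamily `A₀` of `A` by indices `C` that are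
-- independent modulo `⟨A⟩`, so that the image of `⟨B⟩` in `M ⧸ ⟨A⟩` is spanned freely by `C`.
theorem exists_maximal_linearIndepOn_isTorsionFree_mod_span (v : ι → M) (A : Set ι) :
    ∃ B, LinearIndepOn R v B ∧ (∀ i, ∃ a : R, a ≠ 0 ∧ a • v i ∈ Submodule.span R (v '' B)) ∧
      ∀ m ∈ Submodule.span R (v '' B), ∀ a : R, a ≠ 0 →
        a • m ∈ Submodule.span R (v '' A) → m ∈ Submodule.span R (v '' A) := by
  let P := Submodule.span R (v '' A)
  obtain ⟨A₀, hA₀, hA₀_indep, hA₀_max⟩ := exists_maximal_linearIndepOn_subset (R := R) v A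
  obtain ⟨C, -, hC_indep, hC_max⟩ :=
    exists_maximal_linearIndepOn_subset (R := R) (P.mkQ ∘ v) Set.univ
  have hA₀P : Submodule.span R (v '' A₀) ≤ P := Submodule.span_mono (Set.image_mono hA₀)
  refine ⟨A₀ ∪ C, hA₀_indep.union_of_quotient
    (hC_indep.of_comp (Submodule.mapQ _ P LinearMap.id hA₀P)), fun i ↦ ?_, fun m hm a ha ham ↦ ?_⟩
  · obtain ⟨a, ha, hai⟩ := hC_max i trivial
    rw [Set.image_comp, Submodule.span_image] at hai
    obtain ⟨c, hc, hci⟩ := hai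
    obtain ⟨b, hb, hbi⟩ := exists_smul_mem_of_mem_span hA₀_max
      ((Submodule.Quotient.eq P).1 hci)
    refine ⟨b * a, mul_ne_zero hb ha, ?_⟩
    rw [Set.image_union, Submodule.span_union, mul_smul,
      ← sub_sub_cancel (b • c) (b • a • v i), ← smul_sub]
    exact Submodule.sub_mem _ (Submodule.mem_sup_right (Submodule.smul_mem _ b hc))
      (Submodule.mem_sup_left hbi)
  · have hmC : P.mkQ m ∈ Submodule.span R ((P.mkQ ∘ v) '' C) := by
      rw [Set.image_union, Submodule.span_union] at hm
      obtain ⟨p, hp, c, hc, rfl⟩ := Submodule.mem_sup.1 hm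
      rw [Set.image_comp, Submodule.span_image, map_add, Submodule.mkQ_apply,
        (Submodule.Quotient.mk_eq_zero P).2 (hA₀P hp), zero_add]
      exact Submodule.mem_map_of_mem hc
    exact (Submodule.Quotient.mk_eq_zero P).1
      (eq_zero_of_smul_eq_zero_of_mem_span hC_indep hmC ha
        ((Submodule.Quotient.mk_eq_zero P).2 ham))

end LinearIndepOn

theorem genSub_eq_span (X : Fin N → G) (A : Finset (Fin N)) :
    genSub X A = (Submodule.span ℤ (X '' A)).toAddSubgroup :=
  (Submodule.span_int_eq_addSubgroupClosure _).symm

theorem mem_genSub_iff_mem_span {X : Fin N → G} {A : Finset (Fin N)} {g : G} :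
    g ∈ genSub X A ↔ g ∈ Submodule.span ℤ (X '' A) := by
  rw [genSub_eq_span, Submodule.mem_toAddSubgroup]

theorem rkA_eq_finrank_span (X : Fin N → G) (A : Finset (Fin N)) :
    rkA X A = Module.finrank ℤ (Submodule.span ℤ (X '' A)) := by
  rw [rkA, genSub_eq_span]
  rfl

theorem rkA_le_card (X : Fin N → G) (A : Finset (Fin N)) : rkA X A ≤ A.card := by
  classical
  rw [rkA_eq_finrank_span, ← coe_image]
  exact (finrank_span_finset_le_card _).trans card_image_le

theorem rkA_mono (X : Fin N → G) {A B : Finset (Fin N)} (hAB : A ⊆ B) : rkA X A ≤ rkA X B := by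
  rw [rkA_eq_finrank_span, rkA_eq_finrank_span]
  have : Module.Finite ℤ (Submodule.span ℤ (X '' B)) :=
    Module.Finite.span_of_finite ℤ (B.finite_toSet.image X)
  exact Submodule.finrank_mono (Submodule.span_mono (Set.image_mono (coe_subset.2 hAB)))

theorem rkA_le_tfRank [AddGroup.FG G] (X : Fin N → G) (A : Finset (Fin N)) :
    rkA X A ≤ tfRank G :=
  (tfRank_quotient_add_tfRank (genSub X A)).le.trans' le_add_self

theorem isBasis_of_linearIndepOn {X : Fin N → G} {B : Finset (Fin N)}
    (hB : LinearIndepOn ℤ X (B : Set (Fin N)))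
    (hmax : ∀ i, ∃ a : ℤ, a ≠ 0 ∧ a • X i ∈ genSub X B) : IsBasis X B := by
  constructor
  · rw [rkA_eq_finrank_span, Set.image_eq_range, finrank_span_eq_card hB]
    exact Fintype.card_coe B
  · rw [rkA_eq_finrank_span, rkA_eq_finrank_span]
    refine finrank_eq_of_forall_exists_smul_mem
      (Submodule.span_mono (Set.image_mono (coe_subset.2 (subset_univ B)))) fun t ht ↦
        exists_smul_mem_of_mem_span (fun i _ ↦ ?_) ht
    simpa only [mem_genSub_iff_mem_span] using hmax i

theorem mA_nsmul_mem_genSub {X : Fin N → G} {A : Finset (Fin N)} {g : G} {a : ℤ} (ha : a ≠ 0)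
    (hag : a • g ∈ genSub X A) : mA X A • g ∈ genSub X A := by
  have htors : (g : G ⧸ genSub X A) ∈ AddCommGroup.torsion (G ⧸ genSub X A) :=
    isOfFinAddOrder_iff_zsmul_eq_zero.2 ⟨a, ha, (QuotientAddGroup.eq_zero_iff _).2 hag⟩
  have hcard := card_nsmul_eq_zero' (x := (⟨_, htors⟩ : AddCommGroup.torsion (G ⧸ genSub X A)))
  exact (QuotientAddGroup.eq_zero_iff _).1 (congrArg Subtype.val hcard)

theorem exists_isBasis_nsmul_mem_genSub (X : Fin N → G) (A : Finset (Fin N)) :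
    ∃ B, IsBasis X B ∧
      ∀ g : G, ∀ a : ℤ, a ≠ 0 → a • g ∈ genSub X A → mA X B • g ∈ genSub X A := by
  obtain ⟨B, hB, hmax, hsat⟩ := exists_maximal_linearIndepOn_isTorsionFree_mod_span (R := ℤ) X A
  lift B to Finset (Fin N) using B.toFinite
  simp only [← mem_genSub_iff_mem_span] at hmax hsat
  refine ⟨B, isBasis_of_linearIndepOn hB hmax, fun g a ha hag ↦ ?_⟩
  obtain ⟨b, hb, hbg⟩ : ∃ b : ℤ, b ≠ 0 ∧ b • a • g ∈ genSub X B := by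
    simp only [mem_genSub_iff_mem_span] at hmax hag ⊢
    exact exists_smul_mem_of_mem_span (fun i _ ↦ hmax i) hag
  have hBg : mA X B • g ∈ genSub X B :=
    mA_nsmul_mem_genSub (mul_ne_zero hb ha) (mul_smul b a g ▸ hbg)
  refine hsat _ hBg a ha ?_
  rw [smul_comm]
  exact AddSubgroup.nsmul_mem _ hag _

theorem coprime_mA_of_memZM {X : Fin N → G} {q : ℕ} (hq : memZM X q) {B : Finset (Fin N)}
    (hB : IsBasis X B) : q.Coprime (mA X B) := by
  classical
  refine Nat.Coprime.coprime_dvd_right ?_ hq.2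
  exact dvd_lcm (mem_filter.2 ⟨mem_powerset.2 (subset_univ B), hB⟩)

theorem isSMulRegular_quotient_genSub {X : Fin N → G} {q : ℕ} (hq : memZM X q)
    (A : Finset (Fin N)) : IsSMulRegular (G ⧸ genSub X A) q := by
  refine IsSMulRegular.of_right_eq_zero_of_smul ?_
  rintro ⟨g⟩ hg
  obtain ⟨B, hB, hBA⟩ := exists_isBasis_nsmul_mem_genSub X A
  have hqg : q • g ∈ genSub X A := (QuotientAddGroup.eq_zero_iff _).1 hg
  have hBg : mA X B • g ∈ genSub X A :=
    hBA g q (mod_cast hq.1.ne') (by rwa [natCast_zsmul])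
  have hgcd : (q.gcd (mA X B)) • (g : G ⧸ genSub X A) = 0 :=
    gcd_nsmul_eq_zero.2 ⟨hg, (QuotientAddGroup.eq_zero_iff _).2 hBg⟩
  rwa [(coprime_mA_of_memZM hq hB).gcd_eq_one, one_smul] at hgcd

theorem isSMulRegular_of_memZM {X : Fin N → G} {q : ℕ} (hq : memZM X q) : IsSMulRegular G q := by
  refine .of_right_eq_zero_of_smul fun g hg ↦ ?_
  have hzero : (g : G ⧸ genSub X ∅) = 0 :=
    (isSMulRegular_quotient_genSub hq ∅).right_eq_zero_of_smul
      (congrArg (QuotientAddGroup.mk (s := genSub X ∅)) hg)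
  simpa [genSub] using (QuotientAddGroup.eq_zero_iff g).1 hzero

theorem natCard_forall_not {α ι : Type*} [Finite α] [Fintype ι] (P : ι → α → Prop) :
    (Nat.card {a // ∀ i, ¬ P i a} : ℤ) =
      ∑ A ∈ (univ : Finset ι).powerset, (-1) ^ A.card * (Nat.card {a // ∀ i ∈ A, P i a} : ℤ) := by
  classical
  have := Fintype.ofFinite α
  have mem_inf (A : Finset ι) (S : ι → Finset α) (a : α) : a ∈ A.inf S ↔ ∀ i ∈ A, a ∈ S i := by
    simp only [← singleton_subset_iff, Finset.le_inf_iff]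
  have card_inf (A : Finset ι) (Q : ι → α → Prop) [∀ i, DecidablePred (Q i)] :
      (A.inf fun i ↦ univ.filter (Q i)).card = Nat.card {a // ∀ i ∈ A, Q i a} := by
    rw [Nat.card_eq_fintype_card, Fintype.card_subtype]
    congr 1
    ext a
    simp only [mem_inf, mem_filter_univ]
  simpa only [compl_filter, card_inf, mem_univ, forall_const] using
    inclusion_exclusion_card_inf_compl univ fun i ↦ univ.filter (P i)

theorem natCard_addMonoidHom_vanishing [AddGroup.FG G] {q : ℕ} {X : Fin N → G}
    {A : Finset (Fin N)} (hq : IsSMulRegular (G ⧸ genSub X A) q) :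
    Nat.card {φ : G →+ ZMod q // ∀ i ∈ A, φ (X i) = 0} = q ^ (tfRank G - rkA X A) := by
  rw [rkA, ← natCard_addMonoidHom_zmod_le_ker hq]
  refine Nat.card_congr (Equiv.subtypeEquivRight fun φ ↦ ?_)
  rw [genSub, AddSubgroup.closure_le, Set.image_subset_iff]
  rfl

theorem natCard_ker_linearCombination_mul_natCard_span {K M ι : Type*} [Ring K] [AddCommGroup M]
    [Module K M] [Fintype ι] (v : ι → M) :
    Nat.card (LinearMap.ker (Fintype.linearCombination K v)) *
      Nat.card (Submodule.span K (Set.range v)) = Nat.card K ^ Fintype.card ι := by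
  let f := (Fintype.linearCombination K v).toAddMonoidHom
  have hindex : f.ker.index = Nat.card (Submodule.span K (Set.range v)) := by
    rw [AddSubgroup.index_ker, ← Fintype.range_linearCombination]
    rfl
  rw [← hindex, ← Nat.card_eq_fintype_card, ← Nat.card_fun]
  exact f.ker.card_mul_index

theorem natCard_ker_linearCombination_vanishing {K M ι : Type*} [Ring K] [AddCommGroup M]
    [Module K M] [Fintype ι] [DecidableEq ι] (v : ι → M) (A : Finset ι) :
    Nat.card {ψ : LinearMap.ker (Fintype.linearCombination K v) // ∀ i ∈ A, ψ.1 i = 0} =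
      Nat.card (LinearMap.ker (Fintype.linearCombination K fun i : {i // i ∉ A} ↦ v i)) := by
  let restrict : {ψ : ι → K // ∀ i ∈ A, ψ i = 0} ≃ ({i // i ∉ A} → K) :=
    (Equiv.subtypeEquivRight fun ψ ↦ by simp [funext_iff]).trans
      (Equiv.subtypePreimage (· ∈ A) fun _ ↦ 0)
  have hsum (ψ : {ψ : ι → K // ∀ i ∈ A, ψ i = 0}) :
      ∑ i : {i // i ∉ A}, restrict ψ i • v i = ∑ i, ψ.1 i • v i := by
    refine Fintype.sum_of_injective _ Subtype.val_injective _ _ (fun i hi ↦ ?_) fun _ ↦ rfl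
    rw [ψ.2 i (by simpa using hi), zero_smul]
  let commute := (Equiv.subtypeSubtypeEquivSubtypeInter
    (· ∈ LinearMap.ker (Fintype.linearCombination K v)) fun ψ ↦ ∀ i ∈ A, ψ i = 0).trans
      ((Equiv.subtypeEquivRight fun _ ↦ and_comm).trans
        (Equiv.subtypeSubtypeEquivSubtypeInter _ _).symm)
  refine Nat.card_congr (commute.trans (restrict.subtypeEquiv fun ψ ↦ ?_))
  rw [LinearMap.mem_ker, LinearMap.mem_ker, Fintype.linearCombination_apply,
    Fintype.linearCombination_apply, hsum]

/-- The `ℤ/qℤ`-module structure on `G ⧸ qG`, which makes the flow condition `ℤ/qℤ`-linear. -/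
instance qMulQuotientModule (q : ℕ) : Module (ZMod q) (G ⧸ qMul q G) :=
  QuotientAddGroup.zmodModule fun g ↦ ⟨g, trivial, rfl⟩

theorem span_zmod_toAddSubgroup {q : ℕ} {M : Type*} [AddCommGroup M] [Module (ZMod q) M]
    (s : Set M) : (Submodule.span (ZMod q) s).toAddSubgroup = AddSubgroup.closure s :=
  le_antisymm
    (Submodule.span_le (p := AddSubgroup.toZModSubmodule q (AddSubgroup.closure s)).2
      AddSubgroup.subset_closure)
    (AddSubgroup.closure_le _ |>.2 Submodule.subset_span)

theorem natCard_span_zmod_quotient_qMul [AddGroup.FG G] {q : ℕ} (hq₀ : 0 < q) {X : Fin N → G}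
    {A : Finset (Fin N)} (hG : IsSMulRegular G q) (hA : IsSMulRegular (G ⧸ genSub X A) q) :
    Nat.card (Submodule.span (ZMod q) ((fun i ↦ (X i : G ⧸ qMul q G)) '' A)) = q ^ rkA X A := by
  have hmap : (Submodule.span (ZMod q) ((fun i ↦ (X i : G ⧸ qMul q G)) '' A)).toAddSubgroup =
      (genSub X A).map (QuotientAddGroup.mk' (qMul q G)) := by
    rw [span_zmod_toAddSubgroup, genSub, AddMonoidHom.map_closure, ← Set.image_comp]
    rfl
  rw [rkA, ← natCard_map_mk'_qMul hq₀ hG hA, ← hmap]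
  rfl

/-- The module of `q`-flows on `X`, those vanishing somewhere included. -/
def flowModule (q : ℕ) (X : Fin N → G) : Submodule (ZMod q) (Fin N → ZMod q) :=
  LinearMap.ker (Fintype.linearCombination (ZMod q) fun i ↦ (X i : G ⧸ qMul q G))

theorem flowCount_univ_eq_natCard {q : ℕ} (hq₀ : 0 < q) (X : Fin N → G) :
    flowCount q X univ = Nat.card {ψ : flowModule q X // ∀ i, ψ.1 i ≠ 0} := by
  have : NeZero q := ⟨hq₀.ne'⟩
  have val_nsmul (c : ZMod q) (x : G ⧸ qMul q G) : c.val • x = c • x := by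
    rw [← Nat.cast_smul_eq_nsmul (ZMod q), ZMod.natCast_zmod_val]
  simp only [flowCount, val_nsmul]
  let e : (univ : Finset (Fin N)) ≃ Fin N := Equiv.subtypeUnivEquiv mem_univ
  refine Nat.card_congr (((e.arrowCongr (Equiv.refl _)).subtypeEquiv fun ψ ↦ ?_).trans
    (Equiv.subtypeSubtypeEquivSubtypeInter (· ∈ flowModule q X) fun ψ ↦ ∀ i, ψ i ≠ 0).symm)
  rw [and_comm, flowModule, LinearMap.mem_ker, Fintype.linearCombination_apply, ← e.sum_comp]
  exact and_congr Iff.rfl e.forall_congr_left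

theorem natCard_flow_vanishing [AddGroup.FG G] {q : ℕ} (hq₀ : 0 < q) {X : Fin N → G}
    {A : Finset (Fin N)} (hG : IsSMulRegular G q) (hA : IsSMulRegular (G ⧸ genSub X Aᶜ) q) :
    Nat.card {ψ : flowModule q X // ∀ i ∈ A, ψ.1 i = 0} = q ^ (Aᶜ.card - rkA X Aᶜ) := by
  have hrange : Set.range (fun i : {i // i ∉ A} ↦ (X i : G ⧸ qMul q G)) =
      (fun i ↦ (X i : G ⧸ qMul q G)) '' (Aᶜ : Finset (Fin N)) := by
    rw [coe_compl, Set.image_eq_range]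
    rfl
  have hcard : Fintype.card {i // i ∉ A} = Aᶜ.card := by
    rw [Fintype.card_subtype_compl, Fintype.card_coe, card_compl]
  refine Nat.eq_of_mul_eq_mul_right (pow_pos hq₀ (rkA X Aᶜ)) ?_
  rw [flowModule, natCard_ker_linearCombination_vanishing, ← pow_add,
    Nat.sub_add_cancel (rkA_le_card X Aᶜ), ← natCard_span_zmod_quotient_qMul hq₀ hG hA, ← hrange,
    natCard_ker_linearCombination_mul_natCard_span, Nat.card_zmod, hcard]

/-- The Tutte polynomial `T_X(x, y)`, evaluated at integers. -/
def tutteEval (X : Fin N → G) (x y : ℤ) : ℤ :=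
  ∑ A ∈ (univ : Finset (Fin N)).powerset,
    (x - 1) ^ (rkA X univ - rkA X A) * (y - 1) ^ (A.card - rkA X A)

theorem natCard_coloring_eq_tutteEval [AddGroup.FG G] {X : Fin N → G} {q : ℕ} (hq : memZM X q) :
    (Nat.card {φ : G →+ ZMod q // ∀ i, φ (X i) ≠ 0} : ℤ) =
      (-1) ^ rkA X univ * (q : ℤ) ^ (tfRank G - rkA X univ) * tutteEval X (1 - q) 0 := by
  have : Finite (G →+ ZMod q) := Nat.finite_of_card_ne_zero (by
    rw [natCard_addMonoidHom_zmod (isSMulRegular_of_memZM hq)]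
    exact (pow_pos hq.1 _).ne')
  rw [natCard_forall_not fun i (φ : G →+ ZMod q) ↦ φ (X i) = 0, tutteEval, mul_sum]
  refine sum_congr rfl fun A _ ↦ ?_
  rw [natCard_addMonoidHom_vanishing (isSMulRegular_quotient_genSub hq A)]
  obtain ⟨c, hc⟩ := Nat.exists_eq_add_of_le (rkA_le_card X A)
  obtain ⟨d, hd⟩ := Nat.exists_eq_add_of_le (rkA_mono X (subset_univ A))
  obtain ⟨e, he⟩ := Nat.exists_eq_add_of_le (rkA_le_tfRank X univ)
  have hsign : (-1 : ℤ) ^ d * (-1) ^ d = 1 := by rw [← mul_pow]; norm_num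
  rw [he, hc, hd, show rkA X A + d + e - rkA X A = d + e by omega]
  simp only [Nat.add_sub_cancel_left, Nat.cast_mul, Nat.cast_pow,
    show (1 - (q : ℤ)) - 1 = -1 * q by ring, zero_sub, mul_pow, pow_add]
  linear_combination (-(-1 : ℤ) ^ rkA X A * (-1) ^ c * q ^ d * q ^ e) * hsign

theorem flowCount_univ_eq_tutteEval [AddGroup.FG G] {X : Fin N → G} {q : ℕ} (hq : memZM X q) :
    (flowCount q X univ : ℤ) = (-1) ^ (N - rkA X univ) * tutteEval X 0 (1 - q) := by
  have : NeZero q := ⟨hq.1.ne'⟩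
  rw [flowCount_univ_eq_natCard hq.1,
    natCard_forall_not fun i (ψ : flowModule q X) ↦ ψ.1 i = 0, tutteEval, mul_sum, powerset_univ]
  refine Fintype.sum_equiv compl_involutive.toPerm _ _ fun A ↦ ?_
  rw [natCard_flow_vanishing hq.1 (isSMulRegular_of_memZM hq)
    (isSMulRegular_quotient_genSub hq Aᶜ), Function.Involutive.coe_toPerm]
  have hN : A.card + Aᶜ.card = N := by rw [card_add_card_compl, Fintype.card_fin]
  obtain ⟨c, hc⟩ := Nat.exists_eq_add_of_le (rkA_le_card X Aᶜ)
  obtain ⟨d, hd⟩ := Nat.exists_eq_add_of_le (rkA_mono X (subset_univ Aᶜ))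
  obtain ⟨e, he⟩ := Nat.exists_eq_add_of_le ((rkA_le_card X univ).trans_eq (card_fin N))
  have hsign : (-1 : ℤ) ^ A.card = (-1) ^ e * (-1) ^ d * (-1) ^ c := by
    rw [← pow_add, ← pow_add, show e + d + c = A.card + 2 * c by omega, pow_add, pow_mul]
    norm_num
  rw [hsign, Nat.sub_eq_of_eq_add' he, hc, hd]
  simp only [Nat.add_sub_cancel_left, Nat.cast_pow, show (1 - (q : ℤ)) - 1 = -1 * q by ring,
    zero_sub, mul_pow]
  ring

/-- **Brändén–Moci: arithmetic colorings and flows via the (classical) Tutte polynomial.**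
For `q ∈ ℤ_M(X)`:
`χ_X(q) = (−1)^{rk(X)} q^{rk(G)−rk(X)} T_X(1−q, 0)` and
`χ*_X(q) = (−1)^{N−rk(X)} T_X(0, 1−q)`. -/
theorem colorings_flows_tutte
    (G : Type*) [AddCommGroup G] [AddGroup.FG G] {N : ℕ} (X : Fin N → G)
    (q : ℕ) (hq : memZM X q) :
    ((Nat.card {φ : G →+ ZMod q // ∀ i, φ (X i) ≠ 0} : ℤ) =
      (-1 : ℤ) ^ (rkA X univ) * (q : ℤ) ^ (tfRank G - rkA X univ) *
        ∑ A ∈ (univ : Finset (Fin N)).powerset,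
          ((1 - (q : ℤ)) - 1) ^ (rkA X univ - rkA X A) *
            ((0 : ℤ) - 1) ^ (A.card - rkA X A)) ∧
    ((flowCount q X univ : ℤ) =
      (-1 : ℤ) ^ (N - rkA X univ) *
        ∑ A ∈ (univ : Finset (Fin N)).powerset,
          ((0 : ℤ) - 1) ^ (rkA X univ - rkA X A) *
            ((1 - (q : ℤ)) - 1) ^ (A.card - rkA X A)) :=
  ⟨natCard_coloring_eq_tutteEval hq, flowCount_univ_eq_tutteEval hq⟩

end
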